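/- Assume L ∈ Gr(V,m) satisfies L ∩ int(K) ≠ ∅, and that |||·||| = ‖·‖_e is the norm induced by (K,e) for some e ∈ int(K), while ‖·‖ is an arbitrary norm on V. Then σ(L) = ν(L). -/

import Mathlib

/-!
The outer minimum in `σ(L)` is attained at `v = e`: if `‖v‖_e = 1` then `e - v ∈ K`, so
`x - t e ∈ K` with `t ≥ 0` implies `x - t v ∈ K`, so `λ_e ≤ λ_v` wherever `λ_e ≥ 0`. Thus
`σ(L) = max {λ_e(x) : x ∈ L, ‖x‖ ≤ 1}` (`sigmaMeas_eq_maxLambda`).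

On `K*` the dual of `‖·‖_e` is `u ↦ ⟪u, e⟫` (`IsRegularCone.dualNorm_inducedNorm`), so what remains
is the duality between this maximum and the minimum of `‖y - u‖*` over `y ∈ L^⊥` and `u ∈ K*` with
`⟪u, e⟫ = 1`. Weak duality (`maxLambda_le_dualNorm`) is immediate: if `x - t e ∈ K` then
`t ≤ ⟪u, x⟫ = ⟪u - y, x⟫ ≤ ‖y - u‖*`. For strong duality take `s` larger than the maximum. The unit
ball of `L` is compact and disjoint from the closed convex set `s e + K`; a separating functional,
normalized at `e`, is some `u ∈ K*` with `⟪u, ·⟫ ≤ s` on that ball (`exists_dualCone_le`). By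
Hahn–Banach `⟪u, ·⟫` restricted to `L` extends to a functional `w` with `w ≤ s ‖·‖` on `V`, and
`y = u - w` lies in `L^⊥` with `‖y - u‖* ≤ s` (`exists_orthogonal_dualNorm_le`).
-/

open Module RealInnerProductSpace

/-- `N` is a norm on the real vector space `V`. -/
structure IsNorm (V : Type*) [AddCommGroup V] [Module ℝ V] (N : V → ℝ) : Prop where
  nonneg : ∀ x, 0 ≤ N x
  eq_zero_iff : ∀ x, N x = 0 ↔ x = 0
  smul_eq : ∀ (c : ℝ) (x : V), N (c • x) = |c| * N x
  add_le : ∀ x y, N (x + y) ≤ N x + N y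

/-- `K` is a regular closed convex cone: closed, convex, a cone, pointed and solid. -/
structure IsRegularCone (V : Type*) [NormedAddCommGroup V] [InnerProductSpace ℝ V]
    (K : Set V) : Prop where
  closed : IsClosed K
  convex : Convex ℝ K
  smul_mem : ∀ ⦃c : ℝ⦄, 0 < c → ∀ ⦃x⦄, x ∈ K → c • x ∈ K
  pointed : K ∩ (-K) = {0}
  solid : (interior K).Nonempty

variable {V : Type*} [NormedAddCommGroup V] [InnerProductSpace ℝ V]

/-- The dual norm of `N` with respect to the inner product of `V`. -/
noncomputable def dualNorm (N : V → ℝ) (u : V) : ℝ :=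
  sSup {r : ℝ | ∃ x : V, N x = 1 ∧ r = ⟪u, x⟫}

/-- The dual cone of `K`. -/
def dualCone (K : Set V) : Set V := {u : V | ∀ x ∈ K, 0 ≤ ⟪u, x⟫}

/-- `dist(L1,L2) = max_{x ∈ L1, x ≠ 0} min_{v ∈ L2} |||x - v||| / ‖x‖`,
with `‖·‖ = N` and `|||·||| = N'`. -/
noncomputable def grDist (N N' : V → ℝ) (L1 L2 : Submodule ℝ V) : ℝ :=
  sSup {d : ℝ | ∃ x ∈ L1, x ≠ 0 ∧ d = sInf {c : ℝ | ∃ v ∈ L2, c = N' (x - v) / N x}}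

/-- `odist(L1,L2) = max_{x ∈ L1, x ≠ 0} inf_{v ∈ L2, v ≠ 0} |||x - v||| / ‖v‖`. -/
noncomputable def grOdist (N N' : V → ℝ) (L1 L2 : Submodule ℝ V) : ℝ :=
  sSup {d : ℝ | ∃ x ∈ L1, x ≠ 0 ∧
    d = sInf {c : ℝ | ∃ v ∈ L2, v ≠ 0 ∧ c = N' (x - v) / N v}}

/-- The set `Σ_m` of ill-posed `m`-dimensional subspaces. -/
def SigmaIll (K : Set V) (m : ℕ) : Set (Submodule ℝ V) :=
  {L | finrank ℝ L = m ∧ (L : Set V) ∩ K ≠ {0} ∧ (Lᗮ : Set V) ∩ dualCone K ≠ {0}}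

/-- `dist(L, Σ_m) = inf_{L' ∈ Σ_m} dist(L, L')`. -/
noncomputable def distToIll (N N' : V → ℝ) (K : Set V) (m : ℕ) (L : Submodule ℝ V) : ℝ :=
  sInf {d : ℝ | ∃ L' ∈ SigmaIll K m, d = grDist N N' L L'}

/-- `odist(Σ_m, L) = inf_{L' ∈ Σ_m} odist(L', L)`. -/
noncomputable def odistToIll (N N' : V → ℝ) (K : Set V) (m : ℕ) (L : Submodule ℝ V) : ℝ :=
  sInf {d : ℝ | ∃ L' ∈ SigmaIll K m, d = grOdist N N' L' L}

/-- `ν(L) = min {‖y - u‖* : u ∈ K*, y ∈ L^⊥, |||u|||* = 1}`. -/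
noncomputable def nu (N N' : V → ℝ) (K : Set V) (L : Submodule ℝ V) : ℝ :=
  sInf {r : ℝ | ∃ u ∈ dualCone K, ∃ y ∈ Lᗮ, dualNorm N' u = 1 ∧ r = dualNorm N (y - u)}

/-- `ν̄(L) = min {|||v - x||| : v ∈ K, x ∈ L, ‖x‖ = 1}`. -/
noncomputable def nubar (N N' : V → ℝ) (K : Set V) (L : Submodule ℝ V) : ℝ :=
  sInf {r : ℝ | ∃ v ∈ K, ∃ x ∈ L, N x = 1 ∧ r = N' (v - x)}

/-- `λ_v(x) = sup {t : x - t v ∈ K}`. -/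
noncomputable def lambdaVec (K : Set V) (v x : V) : ℝ := sSup {t : ℝ | x - t • v ∈ K}

/-- `σ(L) = min_{v ∈ K, |||v||| = 1} max_{x ∈ L, ‖x‖ ≤ 1} λ_v(x)`. -/
noncomputable def sigmaMeas (N N' : V → ℝ) (K : Set V) (L : Submodule ℝ V) : ℝ :=
  sInf {r : ℝ | ∃ v ∈ K, N' v = 1 ∧
    r = sSup {c : ℝ | ∃ x ∈ L, N x ≤ 1 ∧ c = lambdaVec K v x}}

/-- `Sym(L) = min_{v ∈ K, ‖v‖ = 1} sup {t ≥ 0 : ∃ x ∈ K, ‖x‖ ≤ 1, x + t v ∈ L}`. -/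
noncomputable def symMeas (N : V → ℝ) (K : Set V) (L : Submodule ℝ V) : ℝ :=
  sInf {r : ℝ | ∃ v ∈ K, N v = 1 ∧
    r = sSup {t : ℝ | 0 ≤ t ∧ ∃ x ∈ K, N x ≤ 1 ∧ x + t • v ∈ L}}

/-- The norm `‖·‖_e` induced by the pair `(K, e)`. -/
noncomputable def inducedNorm (K : Set V) (e : V) (x : V) : ℝ :=
  sInf {α : ℝ | 0 ≤ α ∧ x + α • e ∈ K ∧ -x + α • e ∈ K}

/-! ### Norms and dual norms -/

/-- A norm on a finite-dimensional space is continuous, being convex. -/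
lemma IsNorm.continuous_fun [FiniteDimensional ℝ V] {N : V → ℝ} (hN : IsNorm V N) :
    Continuous N := by
  have hc : ConvexOn ℝ Set.univ N := by
    refine ⟨convex_univ, fun x _ y _ a b ha hb _ => ?_⟩
    have h := hN.add_le (a • x) (b • y)
    rw [hN.smul_eq, hN.smul_eq, abs_of_nonneg ha, abs_of_nonneg hb] at h
    simpa using h
  exact continuousOn_univ.1 (hc.continuousOn isOpen_univ)

/-- Half of the equivalence of norms: `N` dominates a multiple of the Euclidean norm. -/
lemma IsNorm.exists_bound [FiniteDimensional ℝ V] {N : V → ℝ} (hN : IsNorm V N) :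
    ∃ R : ℝ, 0 ≤ R ∧ ∀ x, ‖x‖ ≤ R * N x := by
  obtain h | h := (Metric.sphere (0 : V) 1).eq_empty_or_nonempty
  · refine ⟨0, le_rfl, fun x => ?_⟩
    by_contra hx
    have hx : x ≠ 0 := by rintro rfl; simp at hx
    have : (‖x‖⁻¹ • x) ∈ Metric.sphere (0 : V) 1 := by
      simp [norm_smul, norm_ne_zero_iff.2 hx]
    simp [h] at this
  · obtain ⟨z, hz, hmin⟩ := (isCompact_sphere (0 : V) 1).exists_isMinOn h
      hN.continuous_fun.continuousOn
    have hz0 : z ≠ 0 := by rintro rfl; simp at hz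
    have hpos : 0 < N z := lt_of_le_of_ne (hN.nonneg z) fun h => hz0 ((hN.eq_zero_iff z).1 h.symm)
    refine ⟨(N z)⁻¹, by positivity, fun x => ?_⟩
    by_cases hx : x = 0
    · subst hx; simpa using mul_nonneg (inv_nonneg.2 hpos.le) (hN.nonneg 0)
    have hxp : 0 < ‖x‖ := norm_pos_iff.2 hx
    have hm : (‖x‖⁻¹ • x) ∈ Metric.sphere (0 : V) 1 := by
      simp [norm_smul, norm_ne_zero_iff.2 hx]
    have h1 : N z ≤ N (‖x‖⁻¹ • x) := hmin hm
    rw [hN.smul_eq, abs_of_pos (by positivity), inv_mul_eq_div, le_div_iff₀ hxp] at h1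
    rw [inv_mul_eq_div, le_div_iff₀ hpos]
    linarith

lemma IsNorm.neg_eq {N : V → ℝ} (hN : IsNorm V N) (x : V) : N (-x) = N x := by
  simpa using hN.smul_eq (-1) x

lemma IsNorm.map_zero {N : V → ℝ} (hN : IsNorm V N) : N 0 = 0 := (hN.eq_zero_iff 0).2 rfl

/-- The supremum defining the dual norm is bounded, so it dominates its elements; the estimate
extends by homogeneity from the unit sphere to the unit ball. -/
lemma IsNorm.inner_le_dualNorm [FiniteDimensional ℝ V] {N : V → ℝ} (hN : IsNorm V N)
    (w : V) {x : V} (hx : N x ≤ 1) : ⟪w, x⟫ ≤ dualNorm N w := by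
  obtain ⟨R, hR0, hR⟩ := hN.exists_bound
  have key : ∀ z, N z = 1 → ⟪w, z⟫ ≤ dualNorm N w := by
    intro z hz
    refine le_csSup ⟨‖w‖ * R, ?_⟩ ⟨z, hz, rfl⟩
    rintro r ⟨y, hy, rfl⟩
    have h1 := hR y
    rw [hy, mul_one] at h1
    exact (real_inner_le_norm w y).trans (mul_le_mul_of_nonneg_left h1 (norm_nonneg w))
  have hnn : 0 ≤ dualNorm N w := by
    by_cases h : ∃ z, N z = 1
    · obtain ⟨z, hz⟩ := h
      have h1 := key z hz
      have h2 := key (-z) (by rw [hN.neg_eq, hz])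
      rw [inner_neg_right] at h2
      linarith
    · refine Real.sSup_nonneg ?_
      rintro r ⟨z, hz, -⟩
      exact absurd ⟨z, hz⟩ h
  by_cases h0 : x = 0
  · subst h0; simpa using hnn
  have hpos : 0 < N x := lt_of_le_of_ne (hN.nonneg x) fun h => h0 ((hN.eq_zero_iff x).1 h.symm)
  have h1 := key ((N x)⁻¹ • x) (by
    rw [hN.smul_eq, abs_of_pos (by positivity), inv_mul_cancel₀ hpos.ne'])
  rw [real_inner_smul_right, inv_mul_eq_div, div_le_iff₀ hpos] at h1
  exact h1.trans (mul_le_of_le_one_right hnn hx)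

/-! ### Regular cones and the norm induced by an interior point -/

namespace IsRegularCone

variable {K : Set V}

lemma zero_mem (hK : IsRegularCone V K) : (0 : V) ∈ K := by
  have : (0 : V) ∈ K ∩ -K := by rw [hK.pointed]; rfl
  exact this.1

lemma smul_mem' (hK : IsRegularCone V K) {c : ℝ} (hc : 0 ≤ c) {x : V} (hx : x ∈ K) :
    c • x ∈ K := by
  obtain rfl | hc := hc.eq_or_lt
  · simpa using hK.zero_mem
  · exact hK.smul_mem hc hx

lemma add_mem (hK : IsRegularCone V K) {x y : V} (hx : x ∈ K) (hy : y ∈ K) : x + y ∈ K := by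
  have h := hK.smul_mem (two_pos) (hK.convex hx hy (by norm_num : (0 : ℝ) ≤ 1 / 2)
    (by norm_num : (0 : ℝ) ≤ 1 / 2) (by norm_num))
  simpa [smul_add, smul_smul] using h

lemma neg_notMem (hK : IsRegularCone V K) {v : V} (hv : v ∈ K) (h0 : v ≠ 0) : -v ∉ K := by
  intro h
  have : v ∈ K ∩ -K := ⟨hv, h⟩
  rw [hK.pointed] at this
  exact h0 this

/-- The interior of a pointed cone in a nontrivial space avoids `0`. -/
lemma ne_zero_of_interior [Nontrivial V] (hK : IsRegularCone V K) {e : V}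
    (he : e ∈ interior K) : e ≠ 0 := by
  rintro rfl
  obtain ⟨ε, hε, hb⟩ := Metric.mem_nhds_iff.1 (mem_interior_iff_mem_nhds.1 he)
  obtain ⟨x, hx⟩ := exists_ne (0 : V)
  have hxp : 0 < ‖x‖ := norm_pos_iff.2 hx
  have hn : ‖(ε / (2 * ‖x‖)) • x‖ < ε := by
    rw [norm_smul, Real.norm_of_nonneg (by positivity)]
    field_simp
    linarith
  refine hK.neg_notMem (v := (ε / (2 * ‖x‖)) • x) (hb (by simpa using hn))
    (smul_ne_zero (by positivity) hx) (hb (by simpa using hn))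

/-- An interior point of `K` is an order unit. -/
lemma exists_order_unit (hK : IsRegularCone V K) {e : V} (he : e ∈ interior K) :
    ∃ C : ℝ, 0 ≤ C ∧ ∀ x : V, x + (C * ‖x‖) • e ∈ K := by
  obtain ⟨ε, hε, hb⟩ := Metric.mem_nhds_iff.1 (mem_interior_iff_mem_nhds.1 he)
  refine ⟨2 / ε, by positivity, fun x => ?_⟩
  by_cases hx : x = 0
  · subst hx; simpa using hK.zero_mem
  have hxp : 0 < ‖x‖ := norm_pos_iff.2 hx
  have h1 : e + (ε / (2 * ‖x‖)) • x ∈ K := by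
    apply hb
    rw [Metric.mem_ball, dist_eq_norm, add_sub_cancel_left, norm_smul,
      Real.norm_of_nonneg (by positivity)]
    field_simp
    linarith
  have h2 := hK.smul_mem (show 0 < 2 / ε * ‖x‖ by positivity) h1
  rw [smul_add, smul_smul, show 2 / ε * ‖x‖ * (ε / (2 * ‖x‖)) = 1 by field_simp, one_smul,
    add_comm] at h2
  exact h2

/-- The infimum defining `‖x‖_e` is attained; only the second membership is recorded. -/
lemma inducedNorm_smul_sub_mem (hK : IsRegularCone V K) {e : V} (he : e ∈ interior K) (x : V) :
    inducedNorm K e x • e - x ∈ K := by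
  obtain ⟨C, hC, hCx⟩ := hK.exists_order_unit he
  have hne : {α : ℝ | 0 ≤ α ∧ x + α • e ∈ K ∧ -x + α • e ∈ K}.Nonempty :=
    ⟨C * ‖x‖, by positivity, hCx x, by simpa using hCx (-x)⟩
  have hcl : IsClosed {α : ℝ | 0 ≤ α ∧ x + α • e ∈ K ∧ -x + α • e ∈ K} := by
    refine (isClosed_le continuous_const continuous_id).inter (IsClosed.inter ?_ ?_)
    · exact hK.closed.preimage (f := fun α : ℝ => x + α • e) (by fun_prop)
    · exact hK.closed.preimage (f := fun α : ℝ => -x + α • e) (by fun_prop)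
  have h := (hcl.csInf_mem hne ⟨0, fun α h => h.1⟩).2.2
  rwa [neg_add_eq_sub] at h

lemma inducedNorm_self [Nontrivial V] (hK : IsRegularCone V K) {e : V} (he : e ∈ interior K) :
    inducedNorm K e e = 1 := by
  have heK : e ∈ K := interior_subset he
  refine IsLeast.csInf_eq ⟨⟨zero_le_one, ?_, ?_⟩, ?_⟩
  · simpa using hK.add_mem heK heK
  · simpa using hK.zero_mem
  · rintro α ⟨-, -, h⟩
    by_contra! hα
    refine hK.neg_notMem heK (hK.ne_zero_of_interior he) ?_
    have h2 := hK.smul_mem (show 0 < (1 - α)⁻¹ from inv_pos.2 (by linarith)) h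
    have h3 : (1 - α)⁻¹ • (-e + α • e) = -e := by
      rw [show -e + α • e = (1 - α) • (-e) by module, smul_smul,
        inv_mul_cancel₀ (by linarith), one_smul]
    rwa [h3] at h2

/-- On the dual cone, the dual of `‖·‖_e` is evaluation at `e`. -/
lemma dualNorm_inducedNorm [Nontrivial V] (hK : IsRegularCone V K) {e : V}
    (he : e ∈ interior K) {u : V} (hu : u ∈ dualCone K) :
    dualNorm (inducedNorm K e) u = ⟪u, e⟫ := by
  refine IsGreatest.csSup_eq ⟨⟨e, hK.inducedNorm_self he, rfl⟩, ?_⟩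
  rintro r ⟨x, hx, rfl⟩
  have h := hu _ (hK.inducedNorm_smul_sub_mem he x)
  rw [hx, one_smul, inner_sub_right] at h
  linarith

/-- `λ_v` grows at most linearly, uniformly in the point. -/
lemma exists_lambda_bound (hK : IsRegularCone V K) {v : V} (hv : v ∈ K) (h0 : v ≠ 0) :
    ∃ D : ℝ, 0 ≤ D ∧ ∀ (x : V) (t : ℝ), x - t • v ∈ K → t ≤ D * ‖x‖ := by
  -- `-v` has positive distance `δ` from `K`, and `t⁻¹ • x - v` lies in `K` near `-v`.
  obtain ⟨δ, hδ, hb⟩ := Metric.mem_nhds_iff.1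
    (hK.closed.isOpen_compl.mem_nhds (hK.neg_notMem hv h0))
  refine ⟨δ⁻¹, by positivity, fun x t ht => ?_⟩
  by_contra! hlt
  have htp : 0 < t := lt_of_le_of_lt (by positivity) hlt
  refine (fun h => hb h : t⁻¹ • (x - t • v) ∈ Metric.ball (-v) δ → _ ∉ K) ?_
    (hK.smul_mem (inv_pos.2 htp) ht)
  rw [smul_sub, smul_smul, inv_mul_cancel₀ htp.ne', one_smul, Metric.mem_ball, dist_eq_norm,
    sub_neg_eq_add, sub_add_cancel, norm_smul, Real.norm_of_nonneg (by positivity),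
    inv_mul_eq_div, div_lt_iff₀ htp]
  rwa [inv_mul_eq_div, div_lt_iff₀ hδ, mul_comm] at hlt

end IsRegularCone

/-! ### The inner maximum in `σ(L)` -/

/-- The inner maximum `max_{x ∈ L, ‖x‖ ≤ 1} λ_v(x)` in the definition of `σ(L)`. -/
noncomputable def maxLambda (N : V → ℝ) (K : Set V) (L : Submodule ℝ V) (v : V) : ℝ :=
  sSup {c : ℝ | ∃ x ∈ L, N x ≤ 1 ∧ c = lambdaVec K v x}

/-- To bound `maxLambda` by `b ≥ 0` it suffices to bound the nonnegative `t` involved. Points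
`x` for which no `t` is admissible have `λ_v(x) = sSup ∅ = 0`, which `b ≥ 0` absorbs. -/
lemma maxLambda_le {N : V → ℝ} {K : Set V} {L : Submodule ℝ V} {v : V} {b : ℝ} (hb : 0 ≤ b)
    (h : ∀ x ∈ L, N x ≤ 1 → ∀ t : ℝ, 0 ≤ t → x - t • v ∈ K → t ≤ b) :
    maxLambda N K L v ≤ b := by
  refine Real.sSup_le ?_ hb
  rintro c ⟨x, hxL, hx, rfl⟩
  refine Real.sSup_le (fun t ht => ?_) hb
  obtain h0 | h0 := le_total 0 t
  · exact h x hxL hx t h0 ht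
  · exact h0.trans hb

section maxLambda

variable [FiniteDimensional ℝ V] {N : V → ℝ} {K : Set V}

lemma le_maxLambda (hN : IsNorm V N) (hK : IsRegularCone V K) (L : Submodule ℝ V) {v : V}
    (hv : v ∈ K) (h0 : v ≠ 0) {x : V} (hxL : x ∈ L) (hx : N x ≤ 1) {t : ℝ}
    (ht : x - t • v ∈ K) : t ≤ maxLambda N K L v := by
  obtain ⟨D, hD, hDb⟩ := hK.exists_lambda_bound hv h0
  obtain ⟨R, hR, hRb⟩ := hN.exists_bound
  have h1 : t ≤ lambdaVec K v x := le_csSup ⟨D * ‖x‖, fun s hs => hDb x s hs⟩ ht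
  refine h1.trans (le_csSup ⟨D * R, ?_⟩ ⟨x, hxL, hx, rfl⟩)
  rintro c ⟨y, -, hy, rfl⟩
  refine Real.sSup_le (fun s hs => (hDb y s hs).trans ?_) (by positivity)
  exact mul_le_mul_of_nonneg_left ((hRb y).trans (mul_le_of_le_one_right hR hy)) hD

lemma maxLambda_nonneg (hN : IsNorm V N) (hK : IsRegularCone V K) (L : Submodule ℝ V) {v : V}
    (hv : v ∈ K) (h0 : v ≠ 0) : 0 ≤ maxLambda N K L v :=
  le_maxLambda hN hK L hv h0 L.zero_mem (by rw [hN.map_zero]; exact zero_le_one)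
    (by simpa using hK.zero_mem)

/-- The outer minimum in `σ(L)` is attained at `v = e`, because `‖v‖_e = 1` gives `v ≤ e` in the
order of `K`. -/
lemma sigmaMeas_eq_maxLambda [Nontrivial V] (hN : IsNorm V N) (hK : IsRegularCone V K) {e : V}
    (he : e ∈ interior K) (L : Submodule ℝ V) :
    sigmaMeas N (inducedNorm K e) K L = maxLambda N K L e := by
  have heK : e ∈ K := interior_subset he
  refine IsLeast.csInf_eq ⟨⟨e, heK, hK.inducedNorm_self he, rfl⟩, ?_⟩
  rintro r ⟨v, hv, hv1, rfl⟩
  have hev := hK.inducedNorm_smul_sub_mem he v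
  rw [hv1, one_smul] at hev
  have hv0 : v ≠ 0 := by
    rintro rfl
    have h0 : inducedNorm K e 0 ≤ 0 := csInf_le ⟨0, fun α h => h.1⟩
      ⟨le_rfl, by simpa using hK.zero_mem, by simpa using hK.zero_mem⟩
    linarith
  refine maxLambda_le (maxLambda_nonneg hN hK L hv hv0) fun x hxL hx t ht0 ht => ?_
  refine le_maxLambda hN hK L hv hv0 hxL hx ?_
  have := hK.add_mem ht (hK.smul_mem' ht0 hev)
  rwa [show x - t • e + t • (e - v) = x - t • v by module] at this

/-- Weak duality. -/
lemma maxLambda_le_dualNorm (hN : IsNorm V N) {e : V} {L : Submodule ℝ V} {u y : V}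
    (hu : u ∈ dualCone K) (hy : y ∈ Lᗮ) (hue : ⟪u, e⟫ = 1) :
    maxLambda N K L e ≤ dualNorm N (y - u) := by
  have key : ∀ x ∈ L, N x ≤ 1 → ⟪u, x⟫ ≤ dualNorm N (y - u) := by
    intro x hxL hx
    have h1 := hN.inner_le_dualNorm (y - u) (x := -x) (by rwa [hN.neg_eq])
    rw [inner_neg_right, inner_sub_left, (L.mem_orthogonal' y).1 hy x hxL] at h1
    linarith
  refine maxLambda_le ?_ fun x hxL hx t _ ht => ?_
  · simpa using key 0 L.zero_mem (by rw [hN.map_zero]; exact zero_le_one)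
  · have h1 := hu _ ht
    rw [inner_sub_right, real_inner_smul_right, hue] at h1
    linarith [key x hxL hx]

/-- First half of strong duality: separating the unit ball of `L` from `s • e + K` produces a
normalized dual functional that is at most `s` on that ball. -/
lemma exists_dualCone_le [Nontrivial V] (hN : IsNorm V N) (hK : IsRegularCone V K) {e : V}
    (he : e ∈ interior K) (L : Submodule ℝ V) {s : ℝ} (hs : maxLambda N K L e < s) :
    ∃ u ∈ dualCone K, ⟪u, e⟫ = 1 ∧ ∀ x ∈ L, N x ≤ 1 → ⟪u, x⟫ ≤ s := by
  have heK : e ∈ K := interior_subset he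
  have he0 := hK.ne_zero_of_interior he
  have hs0 : 0 < s := (maxLambda_nonneg hN hK L heK he0).trans_lt hs
  obtain ⟨R, hR, hRb⟩ := hN.exists_bound
  have hAc : IsCompact ((L : Set V) ∩ {x | N x ≤ 1}) := by
    refine Metric.isCompact_of_isClosed_isBounded
      (L.closed_of_finiteDimensional.inter (isClosed_le hN.continuous_fun continuous_const)) ?_
    refine (Metric.isBounded_closedBall (x := (0 : V)) (r := R)).subset fun x hx => ?_
    rw [mem_closedBall_zero_iff]
    exact (hRb x).trans (mul_le_of_le_one_right hR hx.2)
  have hAconv : Convex ℝ ((L : Set V) ∩ {x | N x ≤ 1}) := by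
    refine L.convex.inter fun x hx y hy a b ha hb hab => ?_
    have h := hN.add_le (a • x) (b • y)
    rw [hN.smul_eq, hN.smul_eq, abs_of_nonneg ha, abs_of_nonneg hb] at h
    have h1 := mul_le_mul_of_nonneg_left (show N x ≤ 1 from hx) ha
    have h2 := mul_le_mul_of_nonneg_left (show N y ≤ 1 from hy) hb
    show N _ ≤ 1
    linarith
  have hBconv : Convex ℝ {z | z - s • e ∈ K} := by
    intro x hx y hy a b ha hb hab
    have h := hK.convex hx hy ha hb hab
    show _ ∈ K
    convert h using 1
    obtain rfl : b = 1 - a := by linarith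
    module
  have hBcl : IsClosed {z | z - s • e ∈ K} :=
    hK.closed.preimage (f := fun z : V => z - s • e) (by fun_prop)
  have hdisj : Disjoint ((L : Set V) ∩ {x | N x ≤ 1}) {z | z - s • e ∈ K} := by
    rw [Set.disjoint_left]
    rintro x ⟨hxL, hx⟩ hxs
    exact (le_maxLambda hN hK L heK he0 hxL hx hxs).not_gt hs
  obtain ⟨f, p, q, hf1, hpq, hf2⟩ :=
    geometric_hahn_banach_compact_closed hAconv hAc hBconv hBcl hdisj
  have hfe : ∀ k ∈ K, q < s * f e + f k := by
    intro k hk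
    have := hf2 (s • e + k) (by simpa using hk)
    simpa using this
  have hp0 : 0 < p := by
    simpa using hf1 0 ⟨L.zero_mem, by simp [hN.map_zero]⟩
  have hfe0 : 0 < f e := by
    have := hfe 0 hK.zero_mem
    rw [map_zero, add_zero] at this
    exact pos_of_mul_pos_right (by linarith) hs0.le
  -- A functional bounded below on a cone is nonnegative there.
  have hfK : ∀ k ∈ K, 0 ≤ f k := by
    intro k hk
    by_contra! hneg
    have hc : 0 < s * f e / (-f k) := div_pos (mul_pos hs0 hfe0) (by linarith)
    have h := hfe _ (hK.smul_mem hc hk)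
    have h2 : s * f e / (-f k) * f k = -(s * f e) := by
      rw [div_neg, neg_mul, div_mul_cancel₀ _ hneg.ne]
    rw [map_smul, smul_eq_mul, h2] at h
    linarith
  have hrep : ∀ x, ⟪(f e)⁻¹ • (InnerProductSpace.toDual ℝ V).symm f, x⟫ = f x / f e := by
    intro x
    rw [real_inner_smul_left, InnerProductSpace.toDual_symm_apply, inv_mul_eq_div]
  refine ⟨(f e)⁻¹ • (InnerProductSpace.toDual ℝ V).symm f, fun k hk => ?_, ?_, ?_⟩
  · rw [hrep]
    exact div_nonneg (hfK k hk) hfe0.le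
  · rw [hrep, div_self hfe0.ne']
  · intro x hxL hx
    rw [hrep, div_le_iff₀ hfe0]
    have h1 := hf1 x ⟨hxL, hx⟩
    have h2 := hfe 0 hK.zero_mem
    rw [map_zero, add_zero] at h2
    linarith

/-- Second half of strong duality: extending `u|_L` to `V` under the sublinear bound `s * N`
corrects `u` by an element of `Lᗮ`. -/
lemma exists_orthogonal_dualNorm_le (hN : IsNorm V N) {L : Submodule ℝ V} {s : ℝ} (hs : 0 ≤ s)
    {u : V} (hu : ∀ x ∈ L, N x ≤ 1 → ⟪u, x⟫ ≤ s) : ∃ y ∈ Lᗮ, dualNorm N (y - u) ≤ s := by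
  have hdom : ∀ x ∈ L, ⟪u, x⟫ ≤ s * N x := by
    intro x hxL
    by_cases h0 : x = 0
    · subst h0; simp [hN.map_zero]
    have hpos : 0 < N x := lt_of_le_of_ne (hN.nonneg x) fun h => h0 ((hN.eq_zero_iff x).1 h.symm)
    have h1 := hu ((N x)⁻¹ • x) (L.smul_mem _ hxL) (by
      rw [hN.smul_eq, abs_of_pos (by positivity), inv_mul_cancel₀ hpos.ne'])
    rwa [real_inner_smul_right, inv_mul_eq_div, div_le_iff₀ hpos] at h1
  obtain ⟨g, hg, hgN⟩ := exists_extension_of_le_sublinear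
    (⟨L, (innerₛₗ ℝ u).comp L.subtype⟩ : V →ₗ.[ℝ] ℝ) (fun x => s * N x)
    (fun c hc x => by
      show s * N (c • x) = c * (s * N x)
      rw [hN.smul_eq, abs_of_pos hc]; ring)
    (fun x y => by
      show s * N (x + y) ≤ s * N x + s * N y
      rw [← mul_add]; exact mul_le_mul_of_nonneg_left (hN.add_le x y) hs)
    (fun x => hdom x x.2)
  have hw : ∀ x, ⟪(InnerProductSpace.toDual ℝ V).symm (LinearMap.toContinuousLinearMap g), x⟫
      = g x := fun x => by simp
  set w := (InnerProductSpace.toDual ℝ V).symm (LinearMap.toContinuousLinearMap g)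
  refine ⟨u - w, ?_, ?_⟩
  · rw [Submodule.mem_orthogonal']
    intro x hxL
    have h1 : g x = ⟪u, x⟫ := hg ⟨x, hxL⟩
    rw [inner_sub_left, hw, h1, sub_self]
  · refine Real.sSup_le ?_ hs
    rintro r ⟨x, hx, rfl⟩
    have h1 : g (-x) ≤ s * N (-x) := hgN (-x)
    rw [hN.neg_eq, hx, mul_one, map_neg] at h1
    rw [sub_sub_cancel_left, inner_neg_left, hw]
    exact h1

end maxLambda

/-- If `L ∩ int K ≠ ∅` and `|||·||| = ‖·‖_e` is the norm induced by `(K, e)` for some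
`e ∈ int K`, then `σ(L) = ν(L)`. -/
theorem stmt_14 {V : Type*} [NormedAddCommGroup V] [InnerProductSpace ℝ V]
    [FiniteDimensional ℝ V]
    (N : V → ℝ) (hN : IsNorm V N)
    (K : Set V) (hK : IsRegularCone V K)
    (e : V) (he : e ∈ interior K)
    (m : ℕ) (hm : m < finrank ℝ V)
    (L : Submodule ℝ V) (hL : finrank ℝ L = m)
    (hint : ((L : Set V) ∩ interior K).Nonempty) :
    sigmaMeas N (inducedNorm K e) K L = nu N (inducedNorm K e) K L := by

  have : Nontrivial V := Module.nontrivial_of_finrank_pos (R := ℝ) (by omega)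
  rw [sigmaMeas_eq_maxLambda hN hK he]
  have hstrong : ∀ s, maxLambda N K L e < s → ∃ u ∈ dualCone K, ∃ y ∈ Lᗮ,
      dualNorm (inducedNorm K e) u = 1 ∧ dualNorm N (y - u) ≤ s := by
    intro s hs
    obtain ⟨u, hu, hue, hus⟩ := exists_dualCone_le hN hK he L hs
    have hs0 := (maxLambda_nonneg hN hK L (interior_subset he) (hK.ne_zero_of_interior he)).trans
      hs.le
    obtain ⟨y, hy, hys⟩ := exists_orthogonal_dualNorm_le hN hs0 hus
    exact ⟨u, hu, y, hy, by rw [hK.dualNorm_inducedNorm he hu, hue], hys⟩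
  have hlow : ∀ r ∈ {r : ℝ | ∃ u ∈ dualCone K, ∃ y ∈ Lᗮ,
      dualNorm (inducedNorm K e) u = 1 ∧ r = dualNorm N (y - u)}, maxLambda N K L e ≤ r := by
    rintro r ⟨u, hu, y, hy, hu1, rfl⟩
    rw [hK.dualNorm_inducedNorm he hu] at hu1
    exact maxLambda_le_dualNorm hN hu hy hu1
  apply le_antisymm
  · obtain ⟨u, hu, y, hy, hu1, -⟩ := hstrong _ (lt_add_one _)
    exact le_csInf ⟨_, u, hu, y, hy, hu1, rfl⟩ hlow
  · refine le_of_forall_gt_imp_ge_of_dense fun s hs => ?_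
    obtain ⟨u, hu, y, hy, hu1, hys⟩ := hstrong s hs
    exact (csInf_le ⟨_, hlow⟩ ⟨u, hu, y, hy, hu1, rfl⟩).trans hys
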